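/- Let d ≥ 2. There exists a constant C ≥ 1 depending only on d such that for every v ∈ ℝ^d \ {0} and every e ∈ ℝ^d: (1/C)(⟨v⟩^{−1}|P_v^⊥ e|² + ⟨v⟩^{−3}|P_v e|²) ≤ e · Ā(v) e ≤ C(⟨v⟩^{−1}|P_v^⊥ e|² + ⟨v⟩^{−3}|P_v e|²). -/

import Mathlib

/-!
The integrand is `|z|⁻³ (|z|² |e|² - (z · e)²) μ(w)` with `z = v - w`, hence nonnegative. Split
`e = a + c v` with `a ⊥ v`. The reflection through the line `ℝ v` fixes `v`, preserves the
Maxwellian, and flips `a`, so the cross term vanishes: `A(e) = A(a) + A(c v)` (`quadA_add`), and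
each piece is estimated on its own.

*Upper bounds.* In general the integrand is at most `|e|² |z|⁻¹ μ(w)`; in the direction `v` it is
also at most `|c v|² |w|² |z|⁻³ μ(w)`, since `z ∧ v = v ∧ w`. With
`1 + |v| ≤ (1 + |z|) (1 + |w|)`, this turns negative powers of `|z|` into the same powers of
`1 + |v|`, at the cost of a factor `(1 + |z|⁻¹) (1 + |w|)⁵`. The integral of that factor against the
Gaussian is bounded uniformly in `v`, because `|z|⁻¹` is locally integrable when `d ≥ 2`.

*Lower bounds.* For a unit vector `u ⊥ e`, Bessel's inequality gives
`|z|² |e|² - (z · e)² ≥ |e|² (z · u)²`. It suffices to keep the `w` in a ball of radius `1/4` inside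
the unit ball. For `e = a`, take `u = v / |v|` and the ball centred at `-u / 2`, where
`z · u ≥ |v| + 1/4`. For `e = c v`, take any unit `u ⊥ v` and the ball centred at `u / 2`, where
`|z · u| ≥ 1/4`.
-/

open MeasureTheory
open scoped InnerProductSpace

/-- The normalized Maxwellian `μ(v) = π^{-d/2} e^{-|v|²}` on `ℝ^d`. -/
noncomputable def maxw (d : ℕ) (v : EuclideanSpace ℝ (Fin d)) : ℝ :=
  Real.pi ^ (-(d : ℝ) / 2) * Real.exp (-‖v‖ ^ 2)

/-- The Japanese bracket `⟨v⟩ = (1 + |v|²)^{1/2}`. -/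
noncomputable def jap {d : ℕ} (v : EuclideanSpace ℝ (Fin d)) : ℝ :=
  Real.sqrt (1 + ‖v‖ ^ 2)

/-- The quadratic form `e ⋅ Ā(v) e` of the Landau diffusion matrix at the Maxwellian,
`Ā(v) = ∫ |v-v_*|⁻¹ (Id - (v-v_*)⊗(v-v_*)/|v-v_*|²) μ(v_*) dv_*`. -/
noncomputable def quadA (d : ℕ) (v e : EuclideanSpace ℝ (Fin d)) : ℝ :=
  ∫ w : EuclideanSpace ℝ (Fin d),
    ‖v - w‖⁻¹ * (‖e‖ ^ 2 - (⟪v - w, e⟫_ℝ / ‖v - w‖) ^ 2) * maxw d w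

/-! ### A uniformly integrable majorant -/

/-- The integrand of `quadA`; at `w = v` the junk value of `⁻¹` makes it zero. -/
noncomputable def landauInt (d : ℕ) (v e w : EuclideanSpace ℝ (Fin d)) : ℝ :=
  ‖v - w‖⁻¹ * (‖e‖ ^ 2 - (⟪v - w, e⟫_ℝ / ‖v - w‖) ^ 2) * maxw d w

/-- An integrable majorant, whose integral does not depend on `v`: a Gaussian in `w`
plus the truncated singularity `|v - w|⁻¹ 1_{|v - w| < 1}`. -/
noncomputable def majorant (d : ℕ) (v w : EuclideanSpace ℝ (Fin d)) : ℝ :=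
  2 * Real.exp (-(1 / 2) * ‖w‖ ^ 2)
    + (Metric.ball (0 : EuclideanSpace ℝ (Fin d)) 1).indicator (fun z => ‖z‖⁻¹) (v - w)

lemma integrable_gauss (d : ℕ) :
    Integrable (fun w : EuclideanSpace ℝ (Fin d) => Real.exp (-(1 / 2) * ‖w‖ ^ 2)) := by
  apply Integrable.of_integral_ne_zero
  rw [GaussianFourier.integral_rexp_neg_mul_sq_norm (by norm_num)]
  positivity

/-- In dimension at least two the singularity `|z|⁻¹` is locally integrable. -/
lemma integrable_sing (d : ℕ) (hd : 2 ≤ d) :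
    Integrable ((Metric.ball (0 : EuclideanSpace ℝ (Fin d)) 1).indicator (fun z => ‖z‖⁻¹)) := by
  have : NeZero d := ⟨by omega⟩
  have : Nontrivial (EuclideanSpace ℝ (Fin d)) := by
    apply Module.nontrivial_of_finrank_pos (R := ℝ)
    simp; omega
  rw [integrable_indicator_iff Metric.isOpen_ball.measurableSet,
    integrableOn_fun_norm_addHaar volume (f := fun y : ℝ => y⁻¹)]
  simp only [finrank_euclideanSpace, Fintype.card_fin, smul_eq_mul]
  obtain ⟨k, rfl⟩ := Nat.exists_eq_add_of_le hd
  have h : IntegrableOn (fun y : ℝ => y ^ k) (Set.Ioo 0 1) :=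
    ((continuous_pow k).integrableOn_Icc (a := (0 : ℝ)) (b := 1)).mono_set Set.Ioo_subset_Icc_self
  refine h.congr_fun (fun y hy => ?_) measurableSet_Ioo
  have : y ≠ 0 := hy.1.ne'
  have e : 2 + k - 1 = k + 1 := by omega
  simp only [e, pow_succ]
  field_simp

lemma integrable_majorant (d : ℕ) (hd : 2 ≤ d) (v : EuclideanSpace ℝ (Fin d)) :
    Integrable (majorant d v) :=
  ((integrable_gauss d).const_mul 2).add ((integrable_sing d hd).comp_sub_left v)

lemma integral_majorant (d : ℕ) (hd : 2 ≤ d) (v : EuclideanSpace ℝ (Fin d)) :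
    ∫ w, majorant d v w = ∫ w, majorant d 0 w := by
  have key : ∀ u : EuclideanSpace ℝ (Fin d), ∫ w, majorant d u w =
      (∫ w : EuclideanSpace ℝ (Fin d), 2 * Real.exp (-(1 / 2) * ‖w‖ ^ 2)) +
      ∫ z, (Metric.ball (0 : EuclideanSpace ℝ (Fin d)) 1).indicator (fun z => ‖z‖⁻¹) z := by
    intro u
    unfold majorant
    rw [integral_add ((integrable_gauss d).const_mul 2) ((integrable_sing d hd).comp_sub_left u),
      integral_sub_left_eq_self
        ((Metric.ball (0 : EuclideanSpace ℝ (Fin d)) 1).indicator (fun z => ‖z‖⁻¹)) volume u]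
  rw [key, key]

lemma majorant_nonneg (d : ℕ) (v w : EuclideanSpace ℝ (Fin d)) : 0 ≤ majorant d v w := by
  unfold majorant
  have : 0 ≤ (Metric.ball (0 : EuclideanSpace ℝ (Fin d)) 1).indicator (fun z => ‖z‖⁻¹) (v - w) :=
    Set.indicator_nonneg (fun z _ => by positivity) _
  positivity

/-- Polynomial weights are absorbed by half of the Gaussian. -/
lemma weight_le_majorant (d : ℕ) (v w : EuclideanSpace ℝ (Fin d)) :
    (1 + ‖v - w‖⁻¹) * (1 + ‖w‖) ^ 5 * Real.exp (-‖w‖ ^ 2)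
      ≤ Real.exp (25 / 2) * majorant d v w := by
  set x := ‖w‖
  have hx : 0 ≤ x := norm_nonneg w
  have h1 : (1 + x) ^ 5 * Real.exp (-x ^ 2) ≤ Real.exp (25 / 2) * Real.exp (-(1 / 2) * x ^ 2) := by
    calc (1 + x) ^ 5 * Real.exp (-x ^ 2) ≤ Real.exp x ^ 5 * Real.exp (-x ^ 2) := by
          gcongr; linarith [Real.add_one_le_exp x]
      _ = Real.exp (5 * x + -x ^ 2) := by rw [← Real.exp_nat_mul, ← Real.exp_add]; norm_num
      _ ≤ Real.exp (25 / 2 + -(1 / 2) * x ^ 2) := by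
          apply Real.exp_le_exp.2; nlinarith [sq_nonneg (x - 5)]
      _ = _ := by rw [Real.exp_add]
  have h2 : Real.exp (-(1 / 2) * x ^ 2) ≤ 1 := by
    apply Real.exp_le_one_iff.2; nlinarith [sq_nonneg x]
  have hE : 0 < Real.exp (-(1 / 2) * x ^ 2) := Real.exp_pos _
  have hr : 0 ≤ ‖v - w‖⁻¹ := by positivity
  have h3 : (1 + ‖v - w‖⁻¹) * Real.exp (-(1 / 2) * x ^ 2) ≤ majorant d v w := by
    unfold majorant
    by_cases h : v - w ∈ Metric.ball (0 : EuclideanSpace ℝ (Fin d)) 1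
    · rw [Set.indicator_of_mem h]
      nlinarith [mul_le_mul_of_nonneg_left h2 hr]
    · rw [Set.indicator_of_notMem h]
      have h4 : 1 ≤ ‖v - w‖ := by simpa using h
      have h5 : ‖v - w‖⁻¹ ≤ 1 := inv_le_one_of_one_le₀ h4
      nlinarith
  calc _ = (1 + ‖v - w‖⁻¹) * ((1 + x) ^ 5 * Real.exp (-x ^ 2)) := by ring
    _ ≤ (1 + ‖v - w‖⁻¹) * (Real.exp (25 / 2) * Real.exp (-(1 / 2) * x ^ 2)) := by gcongr
    _ = Real.exp (25 / 2) * ((1 + ‖v - w‖⁻¹) * Real.exp (-(1 / 2) * x ^ 2)) := by ring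
    _ ≤ _ := by gcongr

/-! ### Upper bounds -/

/-- The normalising constant `π^{-d/2}` of the Maxwellian. -/
noncomputable def maxwConst (d : ℕ) : ℝ := Real.pi ^ (-(d : ℝ) / 2)

lemma maxwConst_pos (d : ℕ) : 0 < maxwConst d := Real.rpow_pos_of_pos Real.pi_pos _

lemma maxw_eq (d : ℕ) (w : EuclideanSpace ℝ (Fin d)) :
    maxw d w = maxwConst d * Real.exp (-‖w‖ ^ 2) := rfl

lemma maxw_pos (d : ℕ) (w : EuclideanSpace ℝ (Fin d)) : 0 < maxw d w :=
  mul_pos (maxwConst_pos d) (Real.exp_pos _)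

lemma form_nonneg {d : ℕ} (z e : EuclideanSpace ℝ (Fin d)) :
    0 ≤ ‖e‖ ^ 2 - (⟪z, e⟫_ℝ / ‖z‖) ^ 2 := by
  by_cases hz : ‖z‖ = 0
  · simp [hz]
  have hz' : 0 < ‖z‖ := lt_of_le_of_ne (norm_nonneg z) (Ne.symm hz)
  rw [div_pow, sub_nonneg, div_le_iff₀ (by positivity), ← mul_pow, ← sq_abs ⟪z, e⟫_ℝ]
  gcongr
  rw [mul_comm]; exact abs_real_inner_le_norm z e

lemma landauInt_nonneg (d : ℕ) (v e w : EuclideanSpace ℝ (Fin d)) : 0 ≤ landauInt d v e w :=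
  mul_nonneg (mul_nonneg (by positivity) (form_nonneg _ _)) (maxw_pos d w).le

lemma landauInt_le_inv (d : ℕ) (v e w : EuclideanSpace ℝ (Fin d)) :
    landauInt d v e w ≤ ‖v - w‖⁻¹ * ‖e‖ ^ 2 * maxw d w := by
  have := (maxw_pos d w).le
  unfold landauInt
  gcongr
  nlinarith [sq_nonneg (⟪v - w, e⟫_ℝ / ‖v - w‖)]

lemma one_add_norm_le {d : ℕ} (v w : EuclideanSpace ℝ (Fin d)) :
    1 + ‖v‖ ≤ (1 + ‖v - w‖) * (1 + ‖w‖) := by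
  have h := norm_add_le (v - w) w
  rw [sub_add_cancel] at h
  nlinarith [mul_nonneg (norm_nonneg (v - w)) (norm_nonneg w)]

/-- Pointwise form of the decay `⟨v⟩⁻¹`, valid in every direction `e`. -/
lemma landauInt_le_majorant (d : ℕ) (v e w : EuclideanSpace ℝ (Fin d)) :
    landauInt d v e w ≤
      (maxwConst d * Real.exp (25 / 2) * (1 + ‖v‖)⁻¹ * ‖e‖ ^ 2) * majorant d v w := by
  have hc := maxwConst_pos d
  have hM := weight_le_majorant d v w
  have hw := norm_nonneg w
  have hv : 0 < 1 + ‖v‖ := by positivity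
  have h1 : ‖v - w‖⁻¹ ≤ (1 + ‖v‖)⁻¹ * ((1 + ‖v - w‖⁻¹) * (1 + ‖w‖) ^ 5) := by
    rw [inv_mul_eq_div, le_div_iff₀ hv]
    have h2 : ‖v - w‖⁻¹ * (1 + ‖v‖) ≤ ‖v - w‖⁻¹ * ((1 + ‖v - w‖) * (1 + ‖w‖)) := by
      gcongr; exact one_add_norm_le v w
    have h3 : ‖v - w‖⁻¹ * ‖v - w‖ ≤ 1 := inv_mul_le_one
    calc _ ≤ _ := h2
      _ = (‖v - w‖⁻¹ * ‖v - w‖ + ‖v - w‖⁻¹) * (1 + ‖w‖) := by ring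
      _ ≤ (1 + ‖v - w‖⁻¹) * (1 + ‖w‖) ^ 5 := by
        gcongr
        exact le_self_pow₀ (by linarith) (by norm_num)
  calc landauInt d v e w ≤ ‖v - w‖⁻¹ * ‖e‖ ^ 2 * maxw d w := landauInt_le_inv d v e w
    _ ≤ ((1 + ‖v‖)⁻¹ * ((1 + ‖v - w‖⁻¹) * (1 + ‖w‖) ^ 5)) * ‖e‖ ^ 2 * maxw d w := by
        have := (maxw_pos d w).le
        gcongr
    _ = (maxwConst d * (1 + ‖v‖)⁻¹ * ‖e‖ ^ 2) *
          ((1 + ‖v - w‖⁻¹) * (1 + ‖w‖) ^ 5 * Real.exp (-‖w‖ ^ 2)) := by rw [maxw_eq]; ring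
    _ ≤ (maxwConst d * (1 + ‖v‖)⁻¹ * ‖e‖ ^ 2) * (Real.exp (25 / 2) * majorant d v w) := by gcongr
    _ = _ := by ring

/-- In the direction of `v` the form only sees `w`: since `(v - w) ∧ v = v ∧ w`, one gains
`|w|² |v - w|⁻²`. -/
lemma form_parallel_le {d : ℕ} (v w : EuclideanSpace ℝ (Fin d)) (c : ℝ) (h : v - w ≠ 0) :
    ‖c • v‖ ^ 2 - (⟪v - w, c • v⟫_ℝ / ‖v - w‖) ^ 2 ≤
      ‖c • v‖ ^ 2 * ‖w‖ ^ 2 * (‖v - w‖⁻¹) ^ 2 := by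
  have hz : 0 < ‖v - w‖ := norm_pos_iff.2 h
  have e1 : ‖v - w‖ ^ 2 = ‖v‖ ^ 2 - 2 * ⟪v, w⟫_ℝ + ‖w‖ ^ 2 := norm_sub_sq_real v w
  have e2 : ⟪v - w, c • v⟫_ℝ = c * (‖v‖ ^ 2 - ⟪v, w⟫_ℝ) := by
    rw [inner_smul_right, inner_sub_left, real_inner_self_eq_norm_sq, real_inner_comm]
  have e3 : ‖c • v‖ ^ 2 = c ^ 2 * ‖v‖ ^ 2 := by
    rw [norm_smul, mul_pow, Real.norm_eq_abs, sq_abs]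
  rw [e2, e3, div_pow, inv_pow, ← div_eq_mul_inv, le_div_iff₀ (by positivity), sub_mul,
    div_mul_cancel₀ _ (by positivity), e1]
  nlinarith [sq_nonneg (c * ⟪v, w⟫_ℝ)]

/-- Pointwise form of the decay `⟨v⟩⁻³` in the direction of `v`. -/
lemma landauInt_parallel_le_majorant (d : ℕ) (v w : EuclideanSpace ℝ (Fin d)) (c : ℝ) :
    landauInt d v (c • v) w ≤
      (8 * maxwConst d * Real.exp (25 / 2) * ((1 + ‖v‖) ^ 3)⁻¹ * ‖c • v‖ ^ 2)
        * majorant d v w := by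
  have hc := maxwConst_pos d
  have hM := weight_le_majorant d v w
  have hw := norm_nonneg w
  have hv : 0 < 1 + ‖v‖ := by positivity
  have hm := (maxw_pos d w).le
  have key : landauInt d v (c • v) w ≤
      (((1 + ‖v‖) ^ 3)⁻¹ * (8 * ((1 + ‖v - w‖⁻¹) * (1 + ‖w‖) ^ 5))) * ‖c • v‖ ^ 2 * maxw d w := by
    have h0 := one_add_norm_le v w
    -- Near `w = v` the bound `|z|⁻¹` is the integrable one and `⟨w⟩` controls `⟨v⟩`;
    -- away from it `|z|⁻³` supplies the decay.
    rcases le_total ‖v - w‖ 1 with hr | hr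
    · refine (landauInt_le_inv d v _ w).trans ?_
      gcongr
      rw [inv_mul_eq_div, le_div_iff₀ (by positivity)]
      have h1 : 1 + ‖v‖ ≤ 2 * (1 + ‖w‖) := h0.trans (by gcongr; linarith)
      calc ‖v - w‖⁻¹ * (1 + ‖v‖) ^ 3 ≤ (1 + ‖v - w‖⁻¹) * (2 * (1 + ‖w‖)) ^ 3 := by
            gcongr; linarith
        _ = 8 * ((1 + ‖v - w‖⁻¹) * (1 + ‖w‖) ^ 3) := by ring
        _ ≤ _ := by gcongr <;> linarith
    · have hz : 0 < ‖v - w‖ := by linarith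
      have h2 := form_parallel_le v w c (norm_pos_iff.1 hz)
      have h3 : ‖v - w‖⁻¹ * (‖w‖ ^ 2 * (‖v - w‖⁻¹) ^ 2) ≤
          ((1 + ‖v‖) ^ 3)⁻¹ * (8 * ((1 + ‖v - w‖⁻¹) * (1 + ‖w‖) ^ 5)) := by
        rw [inv_mul_eq_div (a := (1 + ‖v‖) ^ 3), le_div_iff₀ (by positivity)]
        have h4 : 1 + ‖v‖ ≤ (2 * ‖v - w‖) * (1 + ‖w‖) := h0.trans (by gcongr; linarith)
        calc _ ≤ ‖v - w‖⁻¹ * ((1 + ‖w‖) ^ 2 * (‖v - w‖⁻¹) ^ 2)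
                * ((2 * ‖v - w‖) * (1 + ‖w‖)) ^ 3 := by gcongr; linarith
          _ = 8 * (1 * (1 + ‖w‖) ^ 5) := by field_simp; ring
          _ ≤ _ := by gcongr; linarith [inv_nonneg.2 hz.le]
      calc landauInt d v (c • v) w
          ≤ ‖v - w‖⁻¹ * (‖c • v‖ ^ 2 * ‖w‖ ^ 2 * (‖v - w‖⁻¹) ^ 2) * maxw d w := by
            unfold landauInt; gcongr
        _ = (‖v - w‖⁻¹ * (‖w‖ ^ 2 * (‖v - w‖⁻¹) ^ 2)) * ‖c • v‖ ^ 2 * maxw d w := by ring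
        _ ≤ _ := by gcongr
  calc _ ≤ _ := key
    _ = (8 * maxwConst d * ((1 + ‖v‖) ^ 3)⁻¹ * ‖c • v‖ ^ 2) *
          ((1 + ‖v - w‖⁻¹) * (1 + ‖w‖) ^ 5 * Real.exp (-‖w‖ ^ 2)) := by rw [maxw_eq]; ring
    _ ≤ (8 * maxwConst d * ((1 + ‖v‖) ^ 3)⁻¹ * ‖c • v‖ ^ 2) *
          (Real.exp (25 / 2) * majorant d v w) := by gcongr
    _ = _ := by ring

lemma integrable_landauInt (d : ℕ) (hd : 2 ≤ d) (v e : EuclideanSpace ℝ (Fin d)) :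
    Integrable (landauInt d v e) := by
  refine ((integrable_majorant d hd v).const_mul
    (maxwConst d * Real.exp (25 / 2) * (1 + ‖v‖)⁻¹ * ‖e‖ ^ 2)).mono' ?_
    (Filter.Eventually.of_forall fun w => ?_)
  · unfold landauInt maxw
    exact Measurable.aestronglyMeasurable (by fun_prop)
  · rw [Real.norm_of_nonneg (landauInt_nonneg d v e w)]
    exact landauInt_le_majorant d v e w

lemma quadA_le (d : ℕ) (hd : 2 ≤ d) (v e : EuclideanSpace ℝ (Fin d)) :
    quadA d v e ≤ (maxwConst d * Real.exp (25 / 2) * (1 + ‖v‖)⁻¹ * ‖e‖ ^ 2)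
      * ∫ w, majorant d 0 w := by
  rw [← integral_majorant d hd v, ← integral_const_mul]
  exact integral_mono (integrable_landauInt d hd v e) ((integrable_majorant d hd v).const_mul _)
    (landauInt_le_majorant d v e)

lemma quadA_parallel_le (d : ℕ) (hd : 2 ≤ d) (v : EuclideanSpace ℝ (Fin d)) (c : ℝ) :
    quadA d v (c • v) ≤
      (8 * maxwConst d * Real.exp (25 / 2) * ((1 + ‖v‖) ^ 3)⁻¹ * ‖c • v‖ ^ 2)
        * ∫ w, majorant d 0 w := by
  rw [← integral_majorant d hd v, ← integral_const_mul]
  exact integral_mono (integrable_landauInt d hd v _) ((integrable_majorant d hd v).const_mul _)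
    (fun w => landauInt_parallel_le_majorant d v w c)

/-! ### Vanishing of the cross term -/

/-- The form is invariant under isometries fixing `v`, because the Maxwellian is radial. -/
lemma quadA_isometry (d : ℕ) (v e : EuclideanSpace ℝ (Fin d))
    (L : EuclideanSpace ℝ (Fin d) ≃ₗᵢ[ℝ] EuclideanSpace ℝ (Fin d)) (hL : L v = v) :
    quadA d v (L e) = quadA d v e := by
  change ∫ w, landauInt d v (L e) w = ∫ w, landauInt d v e w
  rw [← LinearIsometryEquiv.measurePreserving L |>.integral_comp
    L.toHomeomorph.measurableEmbedding (landauInt d v (L e))]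
  congr 1
  ext w
  have h : v - L w = L (v - w) := by rw [map_sub, hL]
  simp only [landauInt, maxw, h, L.norm_map, L.inner_map_map]

/-- Reflecting through the line `ℝ v` kills the cross term between `v^⊥` and `ℝ v`. -/
lemma quadA_add (d : ℕ) (hd : 2 ≤ d) (v a : EuclideanSpace ℝ (Fin d)) (c : ℝ)
    (ha : ⟪v, a⟫_ℝ = 0) :
    quadA d v (a + c • v) = quadA d v a + quadA d v (c • v) := by
  set R := (ℝ ∙ v).reflection
  have hRv : R v = v := Submodule.reflection_mem_subspace_eq_self (Submodule.mem_span_singleton_self v)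
  have hRa : R a = -a := Submodule.reflection_mem_subspace_orthogonalComplement_eq_neg
    (Submodule.mem_orthogonal_singleton_iff_inner_right.2 ha)
  have h1 : quadA d v (c • v - a) = quadA d v (a + c • v) := by
    rw [← quadA_isometry d v (a + c • v) R hRv, map_add, map_smul, hRv, hRa]
    congr 1; abel
  have h2 : quadA d v (a + c • v) + quadA d v (c • v - a)
      = 2 * quadA d v a + 2 * quadA d v (c • v) := by
    change (∫ w, landauInt d v _ w) + (∫ w, landauInt d v _ w)
      = 2 * (∫ w, landauInt d v _ w) + 2 * (∫ w, landauInt d v _ w)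
    have I := integrable_landauInt d hd v
    rw [← integral_add (I _) (I _), ← integral_const_mul, ← integral_const_mul,
      ← integral_add ((I _).const_mul _) ((I _).const_mul _)]
    congr 1
    ext w
    -- parallelogram identity for the quadratic form `e ↦ landauInt d v e w`
    simp only [landauInt, inner_add_right, inner_sub_right, norm_add_sq_real, norm_sub_sq_real,
      real_inner_comm a]
    ring
  linarith

/-! ### Lower bounds -/

/-- A unit vector `u` orthogonal to `e` bounds the form from below (Bessel's inequality). -/
lemma form_ge {d : ℕ} (z e u : EuclideanSpace ℝ (Fin d)) (hu : ‖u‖ = 1) (hue : ⟪u, e⟫_ℝ = 0)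
    (hz : z ≠ 0) :
    ‖e‖ ^ 2 * ⟪u, z⟫_ℝ ^ 2 * (‖z‖⁻¹) ^ 2 ≤ ‖e‖ ^ 2 - (⟪z, e⟫_ℝ / ‖z‖) ^ 2 := by
  have hz' : 0 < ‖z‖ := norm_pos_iff.2 hz
  set y := z - ⟪u, z⟫_ℝ • u
  have e1 : ⟪y, e⟫_ℝ = ⟪z, e⟫_ℝ := by
    rw [inner_sub_left, real_inner_smul_left, hue]; ring
  have e2 : ‖y‖ ^ 2 = ‖z‖ ^ 2 - ⟪u, z⟫_ℝ ^ 2 := by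
    rw [norm_sub_sq_real, inner_smul_right, norm_smul, hu, real_inner_comm, mul_one,
      Real.norm_eq_abs, sq_abs]; ring
  have e3 : ⟪z, e⟫_ℝ ^ 2 ≤ (‖z‖ ^ 2 - ⟪u, z⟫_ℝ ^ 2) * ‖e‖ ^ 2 := by
    rw [← e1, ← e2, ← mul_pow, ← sq_abs ⟪y, e⟫_ℝ]
    gcongr
    exact abs_real_inner_le_norm y e
  rw [div_pow, inv_pow, ← div_eq_mul_inv, div_le_iff₀ (by positivity), sub_mul,
    div_mul_cancel₀ _ (by positivity)]
  linarith

/-- Lower bound obtained by keeping only the velocities `w` in a ball of radius `1/4` on which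
`(v - w) · u` is bounded below. -/
lemma quadA_ge (d : ℕ) (hd : 2 ≤ d) (v e u p : EuclideanSpace ℝ (Fin d)) (hu : ‖u‖ = 1)
    (hue : ⟪u, e⟫_ℝ = 0) (hp : ‖p‖ = 1 / 2) (m : ℝ) (hm : 0 < m)
    (h : ∀ w ∈ Metric.ball p (1 / 4), m ≤ ⟪u, v - w⟫_ℝ ^ 2) :
    (maxwConst d * Real.exp (-1) * volume.real (Metric.ball (0 : EuclideanSpace ℝ (Fin d)) (1 / 4)))
      * (‖e‖ ^ 2 * m * ((1 + ‖v‖) ^ 3)⁻¹) ≤ quadA d v e := by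
  have hc := maxwConst_pos d
  have I := integrable_landauInt d hd v e
  have hball : volume.real (Metric.ball p (1 / 4))
      = volume.real (Metric.ball (0 : EuclideanSpace ℝ (Fin d)) (1 / 4)) := by
    simp only [Measure.real, Measure.addHaar_ball_center]
  have h1 := setIntegral_ge_of_const_le_real (μ := volume) (f := landauInt d v e)
    (c := maxwConst d * Real.exp (-1) * (‖e‖ ^ 2 * m * ((1 + ‖v‖) ^ 3)⁻¹))
    (s := Metric.ball p (1 / 4)) Metric.isOpen_ball.measurableSet measure_ball_lt_top.ne
    (fun w hw => by
      have hw1 := h w hw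
      have hz : v - w ≠ 0 := by
        intro h0
        rw [h0, inner_zero_right] at hw1
        norm_num at hw1
        linarith
      have hz' : 0 < ‖v - w‖ := norm_pos_iff.2 hz
      have hwn : ‖w‖ ≤ 1 := by
        have h2 : ‖w - p‖ < 1 / 4 := by rwa [← dist_eq_norm]
        have h3 := norm_add_le (w - p) p
        rw [sub_add_cancel] at h3
        linarith
      have hzn : ‖v - w‖ ≤ 1 + ‖v‖ := (norm_sub_le v w).trans (by linarith)
      have hmx : maxwConst d * Real.exp (-1) ≤ maxw d w := by
        rw [maxw_eq]
        gcongr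
        nlinarith [norm_nonneg w]
      have hf := form_ge (v - w) e u hu hue hz
      calc maxwConst d * Real.exp (-1) * (‖e‖ ^ 2 * m * ((1 + ‖v‖) ^ 3)⁻¹)
          ≤ maxw d w * (‖e‖ ^ 2 * ⟪u, v - w⟫_ℝ ^ 2 * (‖v - w‖ ^ 3)⁻¹) := by
            have := (maxw_pos d w).le
            gcongr
        _ = ‖v - w‖⁻¹ * (‖e‖ ^ 2 * ⟪u, v - w⟫_ℝ ^ 2 * (‖v - w‖⁻¹) ^ 2) * maxw d w := by
            field_simp
        _ ≤ landauInt d v e w := by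
            have := (maxw_pos d w).le
            unfold landauInt
            gcongr)
    I.integrableOn
  have h2 := setIntegral_le_integral (s := Metric.ball p (1 / 4)) I
    (Filter.Eventually.of_forall (landauInt_nonneg d v e))
  rw [hball] at h1
  calc _ = _ := by ring
    _ ≤ _ := h1.trans h2

lemma exists_unit_orthogonal (d : ℕ) (hd : 2 ≤ d) (v : EuclideanSpace ℝ (Fin d)) :
    ∃ u : EuclideanSpace ℝ (Fin d), ‖u‖ = 1 ∧ ⟪u, v⟫_ℝ = 0 := by
  have h : (ℝ ∙ v)ᗮ ≠ ⊥ := by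
    intro h
    have h1 := Submodule.finrank_add_finrank_orthogonal (ℝ ∙ v)
    have h2 := finrank_span_le_card (R := ℝ) ({v} : Set (EuclideanSpace ℝ (Fin d)))
    rw [h, finrank_bot, finrank_euclideanSpace, Fintype.card_fin] at h1
    simp at h2
    omega
  obtain ⟨x, hx, hx0⟩ := Submodule.exists_mem_ne_zero_of_ne_bot h
  refine ⟨‖x‖⁻¹ • x, ?_, ?_⟩
  · rw [norm_smul, norm_inv, norm_norm, inv_mul_cancel₀ (norm_ne_zero_iff.2 hx0)]
  · rw [real_inner_smul_left, Submodule.mem_orthogonal_singleton_iff_inner_left.1 hx, mul_zero]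

lemma inner_ball_bound {d : ℕ} (u p w : EuclideanSpace ℝ (Fin d)) (hu : ‖u‖ = 1)
    (hw : w ∈ Metric.ball p (1 / 4)) : |⟪u, w⟫_ℝ - ⟪u, p⟫_ℝ| ≤ 1 / 4 := by
  rw [← inner_sub_right]
  refine (abs_real_inner_le_norm _ _).trans ?_
  rw [hu, one_mul, ← dist_eq_norm]
  exact (Metric.mem_ball.1 hw).le

/-- Coercivity on `v^⊥`, using velocities `w` near `-v / (2|v|)`. -/
lemma quadA_perp_ge (d : ℕ) (hd : 2 ≤ d) (v a : EuclideanSpace ℝ (Fin d)) (hv : v ≠ 0)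
    (ha : ⟪v, a⟫_ℝ = 0) :
    (maxwConst d * Real.exp (-1) * volume.real (Metric.ball (0 : EuclideanSpace ℝ (Fin d)) (1 / 4)))
      * (‖a‖ ^ 2 * (1 / 16) * (1 + ‖v‖)⁻¹) ≤ quadA d v a := by
  have hv' : 0 < ‖v‖ := norm_pos_iff.2 hv
  set u := ‖v‖⁻¹ • v
  have hu : ‖u‖ = 1 := by
    rw [norm_smul, norm_inv, norm_norm, inv_mul_cancel₀ hv'.ne']
  have huv : ⟪u, v⟫_ℝ = ‖v‖ := by
    rw [real_inner_smul_left, real_inner_self_eq_norm_sq]; field_simp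
  have := quadA_ge d hd v a u (-(1 / 2 : ℝ) • u) hu
    (by rw [real_inner_smul_left, ha, mul_zero])
    (by rw [norm_smul, hu]; norm_num) ((1 + ‖v‖) ^ 2 / 16) (by positivity)
    (fun w hw => by
      have h1 := inner_ball_bound u _ w hu hw
      rw [inner_smul_right, real_inner_self_eq_norm_sq, hu] at h1
      have h2 := (abs_le.1 h1).2
      rw [inner_sub_right, huv]
      nlinarith)
  refine le_of_eq_of_le ?_ this
  field_simp

/-- Coercivity on `ℝ v`, using velocities `w` near half a unit vector orthogonal to `v`. -/
lemma quadA_parallel_ge (d : ℕ) (hd : 2 ≤ d) (v : EuclideanSpace ℝ (Fin d)) (c : ℝ) :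
    (maxwConst d * Real.exp (-1) * volume.real (Metric.ball (0 : EuclideanSpace ℝ (Fin d)) (1 / 4)))
      * (‖c • v‖ ^ 2 * (1 / 16) * ((1 + ‖v‖) ^ 3)⁻¹) ≤ quadA d v (c • v) := by
  obtain ⟨u, hu, huv⟩ := exists_unit_orthogonal d hd v
  refine quadA_ge d hd v (c • v) u ((1 / 2 : ℝ) • u) hu
    (by rw [inner_smul_right, huv, mul_zero])
    (by rw [norm_smul, hu]; norm_num) (1 / 16) (by norm_num)
    (fun w hw => by
      have h1 := inner_ball_bound u _ w hu hw
      rw [inner_smul_right, real_inner_self_eq_norm_sq, hu] at h1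
      have h2 := (abs_le.1 h1).1
      rw [inner_sub_right, huv]
      nlinarith)

/-! ### Comparison of `⟨v⟩` with `1 + |v|`, and conclusion -/

lemma jap_le {d : ℕ} (v : EuclideanSpace ℝ (Fin d)) : jap v ≤ 1 + ‖v‖ := by
  unfold jap
  rw [Real.sqrt_le_left (by positivity)]
  nlinarith [norm_nonneg v]

lemma le_jap {d : ℕ} (v : EuclideanSpace ℝ (Fin d)) : 1 + ‖v‖ ≤ 2 * jap v := by
  have h1 : 1 ≤ jap v := Real.one_le_sqrt.2 (by nlinarith [sq_nonneg ‖v‖])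
  have h2 : ‖v‖ ≤ jap v := Real.le_sqrt_of_sq_le (by linarith)
  linarith

/-- **Coercivity and boundedness of the Landau diffusion matrix at Maxwellian:**
for `d ≥ 2` there is `C ≥ 1` (depending only on `d`) such that for all `v ≠ 0` and `e`,
`e ⋅ Ā(v) e ≃ ⟨v⟩⁻¹ |P_v^⊥ e|² + ⟨v⟩⁻³ |P_v e|²`. -/
theorem coercivity_boundedness_A (d : ℕ) (hd : 2 ≤ d) :
    ∃ C : ℝ, 1 ≤ C ∧ ∀ v e : EuclideanSpace ℝ (Fin d), v ≠ 0 →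
      (1 / C) * ((jap v)⁻¹ * ‖e - (⟪v, e⟫_ℝ / ‖v‖ ^ 2) • v‖ ^ 2
            + ((jap v) ^ 3)⁻¹ * ‖(⟪v, e⟫_ℝ / ‖v‖ ^ 2) • v‖ ^ 2)
          ≤ quadA d v e ∧
        quadA d v e ≤ C * ((jap v)⁻¹ * ‖e - (⟪v, e⟫_ℝ / ‖v‖ ^ 2) • v‖ ^ 2
            + ((jap v) ^ 3)⁻¹ * ‖(⟪v, e⟫_ℝ / ‖v‖ ^ 2) • v‖ ^ 2) := by
  set K := maxwConst d * Real.exp (-1) *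
    volume.real (Metric.ball (0 : EuclideanSpace ℝ (Fin d)) (1 / 4)) with hK
  set M := 8 * maxwConst d * Real.exp (25 / 2) * ∫ w, majorant d 0 w with hM
  have hc := maxwConst_pos d
  have hK0 : 0 < K := by
    have : 0 < volume.real (Metric.ball (0 : EuclideanSpace ℝ (Fin d)) (1 / 4)) :=
      ENNReal.toReal_pos (Metric.measure_ball_pos volume _ (by norm_num)).ne'
        measure_ball_lt_top.ne
    positivity
  have hI0 : 0 ≤ ∫ w, majorant d 0 w := integral_nonneg (majorant_nonneg d 0)
  have hM0 : 0 ≤ M := by positivity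
  have hMK : 0 < 128 / K := by positivity
  -- `128 = 16 * 8`: `16` from the coercivity lemmas, `8` from comparing `⟨v⟩³` with `(1 + |v|)³`
  refine ⟨1 + M + 128 / K, by linarith, fun v e hv => ?_⟩
  set c := ⟪v, e⟫_ℝ / ‖v‖ ^ 2 with hcdef
  set a := e - c • v with hadef
  have hv' : 0 < ‖v‖ := norm_pos_iff.2 hv
  have ha : ⟪v, a⟫_ℝ = 0 := by
    rw [hadef, inner_sub_right, inner_smul_right, real_inner_self_eq_norm_sq, hcdef]
    field_simp
    ring
  have he : e = a + c • v := by rw [hadef]; abel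
  have hsplit : quadA d v e = quadA d v a + quadA d v (c • v) := by
    conv_lhs => rw [he]
    exact quadA_add d hd v a c ha
  rw [hsplit]
  have hJ0 : 0 < jap v := Real.sqrt_pos.2 (by positivity)
  have hJ1 := jap_le v
  have hJ2 := le_jap v
  set J := jap v
  have u1 := quadA_le d hd v a
  have u2 := quadA_parallel_le d hd v c
  have l1 := quadA_perp_ge d hd v a hv ha
  have l2 := quadA_parallel_ge d hd v c
  rw [← hK] at l1 l2
  have i1 : (1 + ‖v‖)⁻¹ ≤ J⁻¹ := by gcongr
  have i2 : ((1 + ‖v‖) ^ 3)⁻¹ ≤ (J ^ 3)⁻¹ := by gcongr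
  have i3 : J⁻¹ / 8 ≤ (1 + ‖v‖)⁻¹ := by
    calc J⁻¹ / 8 ≤ J⁻¹ / 2 := by gcongr; norm_num
      _ = (2 * J)⁻¹ := by rw [mul_inv]; ring
      _ ≤ _ := by gcongr
  have i4 : (J ^ 3)⁻¹ / 8 ≤ ((1 + ‖v‖) ^ 3)⁻¹ := by
    calc (J ^ 3)⁻¹ / 8 = ((2 * J) ^ 3)⁻¹ := by rw [mul_pow, mul_inv]; ring
      _ ≤ _ := by gcongr
  set X := J⁻¹ * ‖a‖ ^ 2 + (J ^ 3)⁻¹ * ‖c • v‖ ^ 2 with hX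
  have hX0 : 0 ≤ X := by positivity
  constructor
  · have hC : 1 / (1 + M + 128 / K) ≤ K / 128 := by
      rw [div_le_div_iff₀ (by positivity) (by norm_num)]
      have : K * (128 / K) = 128 := by field_simp
      nlinarith [mul_nonneg hK0.le hM0]
    have a1 : K * (‖a‖ ^ 2 * (1 / 16) * (J⁻¹ / 8)) ≤ quadA d v a := le_trans (by gcongr) l1
    have a2 : K * (‖c • v‖ ^ 2 * (1 / 16) * ((J ^ 3)⁻¹ / 8)) ≤ quadA d v (c • v) :=
      le_trans (by gcongr) l2
    calc _ ≤ K / 128 * X := by gcongr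
      _ = K * (‖a‖ ^ 2 * (1 / 16) * (J⁻¹ / 8))
          + K * (‖c • v‖ ^ 2 * (1 / 16) * ((J ^ 3)⁻¹ / 8)) := by rw [hX]; ring
      _ ≤ _ := add_le_add a1 a2
  · have hC : M ≤ 1 + M + 128 / K := by linarith
    have b1 : quadA d v a ≤ M * (J⁻¹ * ‖a‖ ^ 2) := by
      calc _ ≤ _ := u1
        _ ≤ (8 * maxwConst d * Real.exp (25 / 2) * J⁻¹ * ‖a‖ ^ 2) * ∫ w, majorant d 0 w := by
          gcongr; linarith
        _ = _ := by rw [hM]; ring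
    have b2 : quadA d v (c • v) ≤ M * ((J ^ 3)⁻¹ * ‖c • v‖ ^ 2) := by
      calc _ ≤ _ := u2
        _ ≤ (8 * maxwConst d * Real.exp (25 / 2) * (J ^ 3)⁻¹ * ‖c • v‖ ^ 2)
            * ∫ w, majorant d 0 w := by gcongr
        _ = _ := by rw [hM]; ring
    calc _ ≤ M * X := by rw [hX, mul_add]; exact add_le_add b1 b2
      _ ≤ _ := by gcongr
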